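/- Let G ≅ C_m ⋉_φ C_m. Then every sequence S over G of length |S| = 4m − 3 contains a product-one subsequence T of length exactly m. -/

import Mathlib

/-- A sequence (multiset) over `G` is product-one if its terms can be ordered so
that their product equals `1`. -/
def IsProductOne {G : Type*} [Group G] (S : Multiset G) : Prop :=
  ∃ l : List G, (l : Multiset G) = S ∧ l.prod = 1

open Finset

theorem alt_sum_zero {R ι : Type*} [CommRing R] [DecidableEq ι] (J : Finset ι) :
    ∀ {κ : Type} [DecidableEq κ] (D : Finset κ) (c : κ → R) (l : κ → ι → R), D.card < J.card →
    ∑ I ∈ J.powerset, (-1 : R) ^ I.card * ∏ j ∈ D, (c j + ∑ i ∈ I, l j i) = 0 := by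
  induction J using Finset.induction_on with
  | empty => intro κ _ D c l h; simp at h
  | insert n J hn ih =>
    intro κ _ D c l h
    rw [card_insert_of_notMem hn] at h
    rw [Finset.sum_powerset_insert hn, ← Finset.sum_add_distrib]
    have key : ∀ I ∈ J.powerset, (-1 : R) ^ I.card * ∏ j ∈ D, (c j + ∑ i ∈ I, l j i) +
        (-1 : R) ^ (insert n I).card * ∏ j ∈ D, (c j + ∑ i ∈ insert n I, l j i) =
        - ∑ E ∈ D.powerset.erase D, (∏ j ∈ D \ E, l j n) *
          ((-1 : R) ^ I.card * ∏ j ∈ E, (c j + ∑ i ∈ I, l j i)) := by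
      intro I hI
      have hnI : n ∉ I := fun h => hn (mem_powerset.1 hI h)
      rw [card_insert_of_notMem hnI]
      have : ∏ j ∈ D, (c j + ∑ i ∈ insert n I, l j i) =
          ∏ j ∈ D, ((c j + ∑ i ∈ I, l j i) + l j n) := by
        refine prod_congr rfl fun j _ => ?_
        rw [sum_insert hnI]; ring
      rw [this, Finset.prod_add (fun j => c j + ∑ i ∈ I, l j i) (fun j => l j n), ← Finset.add_sum_erase _ _ (mem_powerset_self D)]
      simp only [sdiff_self, bot_eq_empty, prod_empty, mul_one, pow_succ]
      rw [mul_add, ← add_assoc]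
      have h2 : ∀ a b : R, a * b + a * -1 * b = 0 := fun a b => by ring
      rw [h2, zero_add, mul_neg_one, neg_mul, Finset.mul_sum]
      congr 1
      refine sum_congr rfl fun E _ => ?_
      ring
    rw [Finset.sum_congr rfl key, Finset.sum_neg_distrib, Finset.sum_comm, neg_eq_zero]
    refine Finset.sum_eq_zero fun E hE => ?_
    rw [← Finset.mul_sum, ih, mul_zero]
    have := Finset.mem_erase.1 hE
    have := Finset.card_lt_card (Finset.ssubset_iff_subset_ne.2 ⟨mem_powerset.1 this.2, this.1⟩)
    omega

theorem alt_sum_zero3 {R ι : Type*} [CommRing R] [DecidableEq ι] (J : Finset ι)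
    (x y z : ℕ) (c : R) (w a b : ι → R) (h : x + y + z < J.card) :
    ∑ I ∈ J.powerset, (-1 : R) ^ I.card *
      ((c + ∑ i ∈ I, w i) ^ x * (∑ i ∈ I, a i) ^ y * (∑ i ∈ I, b i) ^ z) = 0 := by
  have := alt_sum_zero J (Finset.univ : Finset ((Fin x ⊕ Fin y) ⊕ Fin z))
    (Sum.elim (Sum.elim (fun _ => c) (fun _ => 0)) (fun _ => 0))
    (Sum.elim (Sum.elim (fun _ => w) (fun _ => a)) (fun _ => b)) (by simpa using h)
  simpa [Fintype.prod_sum_type] using this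


theorem ind_eq {p : ℕ} [Fact p.Prime] (A B C : ZMod p) :
    (1 - A ^ (p-1)) * (1 - B ^ (p-1)) * (1 - C ^ (p-1)) =
      if A = 0 ∧ B = 0 ∧ C = 0 then 1 else 0 := by
  simp only [ZMod.pow_card_sub_one]
  by_cases hA : A = 0 <;> by_cases hB : B = 0 <;> by_cases hC : C = 0 <;> simp [hA, hB, hC]

theorem altA {p : ℕ} [hp : Fact p.Prime] {ι : Type*} [DecidableEq ι] (a b : ι → ZMod p)
    (J : Finset ι) (hJ : 3 * p - 2 ≤ J.card) (c : ZMod p) :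
    ∑ I ∈ J.powerset, (-1 : ZMod p) ^ I.card *
      (if c + (I.card : ZMod p) = 0 ∧ ∑ i ∈ I, a i = 0 ∧ ∑ i ∈ I, b i = 0 then 1 else 0) = 0 := by
  have h2 := hp.out.two_le
  have key := fun x y z h => alt_sum_zero3 J x y z c (fun _ => (1 : ZMod p)) a b h
  simp only [sum_const, nsmul_eq_mul, mul_one] at key
  have e1 := key 0 0 0 (by omega)
  have e2 := key (p-1) 0 0 (by omega)
  have e3 := key 0 (p-1) 0 (by omega)
  have e4 := key 0 0 (p-1) (by omega)
  have e5 := key (p-1) (p-1) 0 (by omega)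
  have e6 := key (p-1) 0 (p-1) (by omega)
  have e7 := key 0 (p-1) (p-1) (by omega)
  have e8 := key (p-1) (p-1) (p-1) (by omega)
  have : ∀ x1 x2 x3 x4 x5 x6 x7 x8 : ZMod p, x1 = 0 → x2 = 0 → x3 = 0 → x4 = 0 → x5 = 0 → x6 = 0 →
    x7 = 0 → x8 = 0 → x1 - x2 - x3 - x4 + x5 + x6 + x7 - x8 = 0 := by
    intros; subst_vars; ring
  refine Eq.trans ?_ (this _ _ _ _ _ _ _ _ e1 e2 e3 e4 e5 e6 e7 e8)
  simp only [← Finset.sum_sub_distrib, ← Finset.sum_add_distrib]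
  refine Finset.sum_congr rfl fun I _ => ?_
  rw [← ind_eq]
  ring

theorem altB {p : ℕ} [hp : Fact p.Prime] {ι : Type*} [DecidableEq ι] (a b : ι → ZMod p)
    (J : Finset ι) (hJ : 3 * p - 3 ≤ J.card) :
    ∑ I ∈ J.powerset, (-1 : ZMod p) ^ I.card *
      (if 0 + (I.card : ZMod p) = 0 ∧ ∑ i ∈ I, a i = 0 ∧ ∑ i ∈ I, b i = 0 then 1 else 0) =
    ∑ I ∈ J.powerset, (-1 : ZMod p) ^ I.card *
      (if 1 + (I.card : ZMod p) = 0 ∧ ∑ i ∈ I, a i = 0 ∧ ∑ i ∈ I, b i = 0 then 1 else 0) := by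
  have h2 := hp.out.two_le
  rw [← sub_eq_zero, ← Finset.sum_sub_distrib]
  have key := fun x y z h => alt_sum_zero3 J x y z 0 (fun _ => (1 : ZMod p)) a b h
  simp only [sum_const, nsmul_eq_mul, mul_one, zero_add] at key
  have : ∀ I ∈ J.powerset, (-1 : ZMod p) ^ I.card *
      (if 0 + (I.card : ZMod p) = 0 ∧ ∑ i ∈ I, a i = 0 ∧ ∑ i ∈ I, b i = 0 then 1 else 0) -
      (-1 : ZMod p) ^ I.card *
      (if 1 + (I.card : ZMod p) = 0 ∧ ∑ i ∈ I, a i = 0 ∧ ∑ i ∈ I, b i = 0 then 1 else 0) =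
      ∑ k ∈ range (p-1), ((p-1).choose k : ZMod p) *
        ((-1 : ZMod p) ^ I.card * ((I.card : ZMod p) ^ k * (∑ i ∈ I, a i) ^ 0 * (∑ i ∈ I, b i) ^ 0)
        - (-1 : ZMod p) ^ I.card * ((I.card : ZMod p) ^ k * (∑ i ∈ I, a i) ^ (p-1) * (∑ i ∈ I, b i) ^ 0)
        - (-1 : ZMod p) ^ I.card * ((I.card : ZMod p) ^ k * (∑ i ∈ I, a i) ^ 0 * (∑ i ∈ I, b i) ^ (p-1))
        + (-1 : ZMod p) ^ I.card * ((I.card : ZMod p) ^ k * (∑ i ∈ I, a i) ^ (p-1) * (∑ i ∈ I, b i) ^ (p-1))) := by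
    intro I _
    rw [← ind_eq, ← ind_eq, zero_add, add_comm 1 (I.card : ZMod p), add_pow, sum_range_succ]
    simp only [one_pow, mul_one, Nat.choose_self, Nat.cast_one]
    have e : ∀ s x A B C : ZMod p, s * ((1 - x) * B * C) - s * ((1 - (A + x)) * B * C) =
      A * (s * B * C) := by intros; ring
    rw [e, Finset.sum_mul]
    refine Finset.sum_congr rfl fun k _ => ?_
    ring
  rw [Finset.sum_congr rfl this, Finset.sum_comm]
  refine Finset.sum_eq_zero fun k hk => ?_
  have hk := mem_range.1 hk
  rw [← Finset.mul_sum, Finset.sum_add_distrib, Finset.sum_sub_distrib, Finset.sum_sub_distrib,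
    key _ _ _ (by omega), key _ _ _ (by omega), key _ _ _ (by omega), key _ _ _ (by omega)]
  ring

/-- zero-sum subsets of size `n` -/
def ZSet {p : ℕ} {ι : Type*} (a b : ι → ZMod p) (n : ℕ) (J : Finset ι) :
    Finset (Finset ι) :=
  {I ∈ J.powersetCard n | ∑ i ∈ I, a i = 0 ∧ ∑ i ∈ I, b i = 0}

theorem mem_ZSet {p : ℕ} {ι : Type*} (a b : ι → ZMod p) (n : ℕ) (J I : Finset ι) :
    I ∈ ZSet a b n J ↔ I ⊆ J ∧ I.card = n ∧ ∑ i ∈ I, a i = 0 ∧ ∑ i ∈ I, b i = 0 := by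
  simp [ZSet, mem_powersetCard, and_assoc]

theorem ZSet_card {p : ℕ} {ι : Type*} (a b : ι → ZMod p) (n : ℕ) (J : Finset ι) :
    ((ZSet a b n J).card : ZMod p) = ∑ I ∈ J.powerset,
      (if I.card = n then 1 else 0) *
      (if ∑ i ∈ I, a i = 0 ∧ ∑ i ∈ I, b i = 0 then 1 else 0) := by
  have : ZSet a b n J = {I ∈ J.powerset | I.card = n ∧ ∑ i ∈ I, a i = 0 ∧ ∑ i ∈ I, b i = 0} := by
    ext I; simp [mem_ZSet]
  rw [this, Finset.card_filter]
  push_cast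
  refine Finset.sum_congr rfl fun I _ => ?_
  split_ifs <;> simp_all

theorem ZSet_zero {p : ℕ} {ι : Type*} (a b : ι → ZMod p) (J : Finset ι) :
    (ZSet a b 0 J).card = 1 := by
  have : ZSet a b 0 J = {∅} := by
    ext I
    simp only [mem_ZSet, mem_singleton, card_eq_zero]
    constructor
    · tauto
    · rintro rfl; simp
  rw [this, card_singleton]

theorem pt0 {p : ℕ} [hp : Fact p.Prime] (hodd : Odd p) (k : ℕ) (hk : k < 4 * p) :
    (-1 : ZMod p) ^ k * (if (0 : ZMod p) + (k : ZMod p) = 0 then 1 else 0) =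
    (if k = 0 then 1 else 0) - (if k = p then 1 else 0) + (if k = 2 * p then 1 else 0)
      - (if k = 3 * p then 1 else 0) := by
  have hp0 := hp.out.pos
  rw [zero_add]
  by_cases h : p ∣ k
  · rw [if_pos ((ZMod.natCast_eq_zero_iff _ _).2 h)]
    obtain ⟨j, rfl⟩ := h
    have hj : j < 4 := by nlinarith
    rw [pow_mul, hodd.neg_one_pow]
    have c1 : p * j = 0 ↔ j = 0 := by simp [hp0.ne']
    have c2 : p * j = p ↔ j = 1 := by simp [hp0.ne']
    have c3 : p * j = 2 * p ↔ j = 2 := by rw [mul_comm]; simp [hp0.ne']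
    have c4 : p * j = 3 * p ↔ j = 3 := by rw [mul_comm]; simp [hp0.ne']
    simp only [c1, c2, c3, c4]
    interval_cases j <;> norm_num
  · rw [if_neg (fun h' => h ((ZMod.natCast_eq_zero_iff _ _).1 h'))]
    have c1 : k ≠ 0 := by rintro rfl; simp at h
    have c2 : k ≠ p := by rintro rfl; simp at h
    have c3 : k ≠ 2 * p := by rintro rfl; simp at h
    have c4 : k ≠ 3 * p := by rintro rfl; simp at h
    simp [c1, c2, c3, c4]

theorem pt1 {p : ℕ} [hp : Fact p.Prime] (hodd : Odd p) (k : ℕ) (hk : k + 1 < 4 * p) :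
    (-1 : ZMod p) ^ k * (if (1 : ZMod p) + (k : ZMod p) = 0 then 1 else 0) =
    (if k = p - 1 then 1 else 0) - (if k = 2 * p - 1 then 1 else 0)
      + (if k = 3 * p - 1 then 1 else 0) := by
  have hp0 := hp.out.pos
  have := pt0 hodd (k+1) hk
  have c1 : k + 1 = p ↔ k = p - 1 := by omega
  have c2 : k + 1 = 2 * p ↔ k = 2 * p - 1 := by omega
  have c3 : k + 1 = 3 * p ↔ k = 3 * p - 1 := by omega
  rw [pow_succ] at this
  push_cast at this
  simp only [zero_add, c1, c2, c3, Nat.succ_ne_zero, if_false, add_comm (k : ZMod p) 1] at this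
  linear_combination -this

theorem grp0 {p : ℕ} [hp : Fact p.Prime] (hodd : Odd p) {ι : Type*} (a b : ι → ZMod p)
    (J : Finset ι) (hJ : J.card < 4 * p) :
    ∑ I ∈ J.powerset, (-1 : ZMod p) ^ I.card *
      (if 0 + (I.card : ZMod p) = 0 ∧ ∑ i ∈ I, a i = 0 ∧ ∑ i ∈ I, b i = 0 then 1 else 0) =
    1 - ((ZSet a b p J).card : ZMod p) + (ZSet a b (2 * p) J).card - (ZSet a b (3 * p) J).card := by
  refine Eq.trans (b := ((ZSet a b 0 J).card : ZMod p) - (ZSet a b p J).card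
    + (ZSet a b (2 * p) J).card - (ZSet a b (3 * p) J).card) ?_ (by rw [ZSet_zero, Nat.cast_one])
  simp only [ZSet_card, ← Finset.sum_sub_distrib, ← Finset.sum_add_distrib]
  refine Finset.sum_congr rfl fun I hI => ?_
  have := card_le_card (mem_powerset.1 hI)
  simp only [← sub_mul, ← add_mul]
  rw [← pt0 hodd _ (by omega), mul_assoc]
  congr 1
  split_ifs <;> simp_all

theorem grp1 {p : ℕ} [hp : Fact p.Prime] (hodd : Odd p) {ι : Type*} (a b : ι → ZMod p)
    (J : Finset ι) (hJ : J.card + 1 < 4 * p) :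
    ∑ I ∈ J.powerset, (-1 : ZMod p) ^ I.card *
      (if 1 + (I.card : ZMod p) = 0 ∧ ∑ i ∈ I, a i = 0 ∧ ∑ i ∈ I, b i = 0 then 1 else 0) =
    ((ZSet a b (p - 1) J).card : ZMod p) - (ZSet a b (2 * p - 1) J).card
      + (ZSet a b (3 * p - 1) J).card := by
  simp only [ZSet_card, ← Finset.sum_sub_distrib, ← Finset.sum_add_distrib]
  refine Finset.sum_congr rfl fun I hI => ?_
  have := card_le_card (mem_powerset.1 hI)
  simp only [← sub_mul, ← add_mul]
  rw [← pt1 hodd _ (by omega), mul_assoc]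
  congr 1
  split_ifs <;> simp_all

theorem ZSet_big {p : ℕ} {ι : Type*} (a b : ι → ZMod p) (n : ℕ) (J : Finset ι) (h : J.card < n) :
    ZSet a b n J = ∅ := by
  rw [Finset.eq_empty_iff_forall_notMem]
  intro I hI
  obtain ⟨h1, h2, -⟩ := (mem_ZSet ..).1 hI
  have := card_le_card h1
  omega

/-- number of supersets of given size -/
theorem card_supersets {ι : Type*} [DecidableEq ι] (X T : Finset ι) (hT : T ⊆ X) (k : ℕ)
    (hk : T.card ≤ k) :
    ((X.powersetCard k).filter (T ⊆ ·)).card = (X.card - T.card).choose (k - T.card) := by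
  rw [← card_sdiff_of_subset hT, ← card_powersetCard]
  refine Finset.card_bij' (fun I _ => I \ T) (fun I _ => I ∪ T) ?_ ?_ ?_ ?_
  · intro I hI
    simp only [mem_filter, mem_powersetCard] at hI ⊢
    exact ⟨sdiff_subset_sdiff hI.1.1 le_rfl, by rw [card_sdiff_of_subset hI.2, hI.1.2]⟩
  · intro I hI
    simp only [mem_filter, mem_powersetCard] at hI ⊢
    refine ⟨⟨union_subset (hI.1.trans sdiff_subset) hT, ?_⟩, subset_union_right⟩
    rw [card_union_of_disjoint, hI.2]
    · omega
    · exact disjoint_of_subset_left hI.1 sdiff_disjoint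
  · intro I hI
    simp only [mem_filter, mem_powersetCard] at hI
    exact sdiff_union_of_subset hI.2
  · intro I hI
    simp only [mem_powersetCard] at hI
    have : Disjoint I T := disjoint_of_subset_left hI.1 sdiff_disjoint
    rw [union_sdiff_right, sdiff_eq_self_of_disjoint this]

theorem sum_ZSet_sub {p : ℕ} {ι : Type*} [DecidableEq ι] (a b : ι → ZMod p) (n k : ℕ)
    (hnk : n ≤ k) (X : Finset ι) :
    ∑ J ∈ X.powersetCard k, (ZSet a b n J).card =
      (X.card - n).choose (k - n) * (ZSet a b n X).card := by
  have : ∀ J ∈ X.powersetCard k, (ZSet a b n J).card =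
      ∑ T ∈ ZSet a b n X, if T ⊆ J then 1 else 0 := by
    intro J hJ
    rw [← Finset.card_filter]
    congr 1
    ext T
    simp only [mem_filter, mem_ZSet]
    have := (mem_powersetCard.1 hJ).1
    constructor
    · rintro ⟨h1, h2⟩; exact ⟨⟨h1.trans this, h2⟩, h1⟩
    · rintro ⟨⟨h1, h2⟩, h3⟩; exact ⟨h3, h2⟩
  rw [Finset.sum_congr rfl this, Finset.sum_comm, mul_comm, ← smul_eq_mul, ← Finset.sum_const]
  refine Finset.sum_congr rfl fun T hT => ?_
  obtain ⟨h1, h2, -⟩ := (mem_ZSet ..).1 hT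
  rw [← Finset.card_filter, card_supersets X T h1 k (by omega), h2]

theorem choose_mod {p : ℕ} [hp : Fact p.Prime] (n k q r : ℕ) (hn : n = p * q + r) (hr : r < p)
    (hk : k + p = n) : ((n.choose k : ℕ) : ZMod p) = q := by
  have hp0 := hp.out.pos
  have := Choose.choose_modEq_choose_mod_mul_choose_div_nat (n := n) (k := p) (p := p)
  have h1 := (ZMod.natCast_eq_natCast_iff _ _ _).2 this
  have e : n.choose k = n.choose p := by
    rw [← Nat.choose_symm (by omega : p ≤ n)]; congr 1; omega
  rw [e, h1, Nat.mod_self, Nat.div_self hp0, hn, Nat.mul_add_div hp0, Nat.div_eq_of_lt hr]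
  simp

/-- Reiher's partition count. -/
theorem swap_count {p : ℕ} {ι : Type*} [DecidableEq ι] (a b : ι → ZMod p) (r s : ℕ)
    (X : Finset ι) :
    ∑ A ∈ ZSet a b r X, (ZSet a b s (X \ A)).card =
      ∑ D ∈ ZSet a b (r + s) X, (ZSet a b s D).card := by
  rw [← Finset.card_sigma, ← Finset.card_sigma]
  refine Finset.card_bij' (fun x _ => ⟨x.1 ∪ x.2, x.2⟩) (fun x _ => ⟨x.1 \ x.2, x.2⟩) ?_ ?_ ?_ ?_
  · rintro ⟨A, C⟩ h
    simp only [mem_sigma, mem_ZSet] at h ⊢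
    obtain ⟨⟨h1, h2, h3, h4⟩, h5, h6, h7, h8⟩ := h
    have hd : Disjoint A C := (disjoint_of_subset_left h5 sdiff_disjoint).symm
    rw [card_union_of_disjoint hd, sum_union hd, sum_union hd, h2, h3, h4, h6, h7, h8]
    simp [union_subset_iff, h1, h5.trans sdiff_subset]
  · rintro ⟨D, C⟩ h
    simp only [mem_sigma, mem_ZSet] at h ⊢
    obtain ⟨⟨h1, h2, h3, h4⟩, h5, h6, h7, h8⟩ := h
    have e1 := Finset.sum_sdiff (f := a) h5
    have e2 := Finset.sum_sdiff (f := b) h5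
    rw [h7, h3, add_zero] at e1
    rw [h8, h4, add_zero] at e2
    refine ⟨⟨sdiff_subset.trans h1, ?_, e1, e2⟩, ?_, h6, h7, h8⟩
    · rw [card_sdiff_of_subset h5]; omega
    · intro x hx; simp [hx, h1 (h5 hx)]
  · rintro ⟨A, C⟩ h
    simp only [mem_sigma, mem_ZSet] at h
    have hd : Disjoint A C := (disjoint_of_subset_left h.2.1 sdiff_disjoint).symm
    simp only [union_sdiff_right, sdiff_eq_self_of_disjoint hd]
  · rintro ⟨D, C⟩ h
    simp only [mem_sigma, mem_ZSet] at h
    simp only [sdiff_union_of_subset h.2.1]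

theorem reiher {p : ℕ} [hp : Fact p.Prime] {ι : Type*} [DecidableEq ι] (a b : ι → ZMod p)
    (X : Finset ι) (hX : X.card = 4 * p - 3) :
    ∃ I ⊆ X, I.card = p ∧ ∑ i ∈ I, a i = 0 ∧ ∑ i ∈ I, b i = 0 := by
  rcases hp.out.eq_two_or_odd' with rfl | hodd
  · obtain ⟨x, hx, y, hy, hne, heq⟩ := Finset.exists_ne_map_eq_of_card_lt_of_maps_to
      (s := X) (t := (univ : Finset (ZMod 2 × ZMod 2))) (f := fun i => (a i, b i))
      (by rw [hX]; decide) (by simp [Set.MapsTo])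
    have h1 : a x = a y := congrArg Prod.fst heq
    have h2 : b x = b y := congrArg Prod.snd heq
    refine ⟨{x, y}, by simp [insert_subset_iff, hx, hy], card_pair hne, ?_, ?_⟩
    · rw [sum_pair hne, h1]; exact CharTwo.add_self_eq_zero _
    · rw [sum_pair hne, h2]; exact CharTwo.add_self_eq_zero _
  by_contra hcon
  have hp3 : 3 ≤ p := by
    have := hp.out.two_le
    obtain ⟨k, hk⟩ := hodd
    omega
  have hno : ∀ J ⊆ X, ZSet a b p J = ∅ := by
    intro J hJ
    rw [Finset.eq_empty_iff_forall_notMem]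
    intro I hI
    obtain ⟨h1, h2⟩ := (mem_ZSet ..).1 hI
    exact hcon ⟨I, h1.trans hJ, h2⟩
  -- 2p count on mid-size sets
  have hmid : ∀ J ⊆ X, 3 * p - 2 ≤ J.card → J.card < 3 * p →
      ((ZSet a b (2 * p) J).card : ZMod p) = -1 := by
    intro J hJ h1 h2
    have e := altA a b J h1 0
    rw [grp0 hodd a b J (by omega), hno J hJ, ZSet_big a b (3 * p) J h2] at e
    simp only [card_empty, Nat.cast_zero] at e
    linear_combination e
  have h3p : ZSet a b (3 * p) X = ∅ := by
    rw [Finset.eq_empty_iff_forall_notMem]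
    intro J hJ
    obtain ⟨h1, h2, h3, h4⟩ := (mem_ZSet ..).1 hJ
    obtain ⟨x, hx⟩ : J.Nonempty := card_pos.1 (by omega)
    have hc := card_erase_of_mem hx
    have e := hmid (J.erase x) ((erase_subset _ _).trans h1) (by omega) (by omega)
    have hne : (ZSet a b (2 * p) (J.erase x)).Nonempty := by
      rw [← card_pos]
      by_contra h0
      have : (ZSet a b (2 * p) (J.erase x)).card = 0 := by omega
      rw [this] at e
      simp at e
    obtain ⟨C, hC⟩ := hne
    obtain ⟨c1, c2, c3, c4⟩ := (mem_ZSet ..).1 hC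
    have c5 : C ⊆ J := c1.trans (erase_subset _ _)
    have e1 := Finset.sum_sdiff (f := a) c5
    have e2 := Finset.sum_sdiff (f := b) c5
    rw [c3, h3, add_zero] at e1
    rw [c4, h4, add_zero] at e2
    refine hcon ⟨J \ C, sdiff_subset.trans h1, ?_, e1, e2⟩
    rw [card_sdiff_of_subset c5]; omega
  have E1 := altA a b X (by omega) 0
  rw [grp0 hodd a b X (by omega), hno X le_rfl, h3p] at E1
  have E2 := altA a b X (by omega) 1
  rw [grp1 hodd a b X (by omega)] at E2
  have E3 : ∑ J ∈ X.powersetCard (3 * p - 3),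
      ((1 : ZMod p) - (ZSet a b p J).card + (ZSet a b (2 * p) J).card
        - (ZSet a b (p - 1) J).card + (ZSet a b (2 * p - 1) J).card) = 0 := by
    refine Finset.sum_eq_zero fun J hJ => ?_
    have hc := (mem_powersetCard.1 hJ).2
    have e := altB a b J (by omega)
    rw [grp0 hodd a b J (by omega), grp1 hodd a b J (by omega),
      ZSet_big a b (3 * p) J (by omega), ZSet_big a b (3 * p - 1) J (by omega)] at e
    simp only [card_empty, Nat.cast_zero] at e
    linear_combination e
  simp only [Finset.sum_add_distrib, Finset.sum_sub_distrib, ← Nat.cast_sum] at E3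
  rw [sum_ZSet_sub a b _ _ (by omega), sum_ZSet_sub a b _ _ (by omega),
    sum_ZSet_sub a b _ _ (by omega), sum_ZSet_sub a b _ _ (by omega), hno X le_rfl,
    sum_const, card_powersetCard, nsmul_eq_mul, hX] at E3
  push_cast at E3
  rw [choose_mod (4 * p - 3) _ 3 (p - 3) (by omega) (by omega) (by omega),
    choose_mod (4 * p - 3 - (2 * p)) _ 1 (p - 3) (by omega) (by omega) (by omega),
    choose_mod (4 * p - 3 - (p - 1)) _ 2 (p - 2) (by omega) (by omega) (by omega),
    choose_mod (4 * p - 3 - (2 * p - 1)) _ 1 (p - 2) (by omega) (by omega) (by omega)] at E3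
  have E4 := congrArg (Nat.cast : ℕ → ZMod p) (swap_count a b (p - 1) (2 * p) X)
  have hh : p - 1 + 2 * p = 3 * p - 1 := by omega
  rw [hh] at E4
  push_cast at E4
  have s1 : ∑ A ∈ ZSet a b (p - 1) X, ((ZSet a b (2 * p) (X \ A)).card : ZMod p) =
      ∑ A ∈ ZSet a b (p - 1) X, (-1) := by
    refine Finset.sum_congr rfl fun A hA => ?_
    obtain ⟨h1, h2, -⟩ := (mem_ZSet ..).1 hA
    have := card_sdiff_of_subset h1
    exact hmid _ sdiff_subset (by omega) (by omega)
  have s2 : ∑ D ∈ ZSet a b (3 * p - 1) X, ((ZSet a b (2 * p) D).card : ZMod p) =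
      ∑ D ∈ ZSet a b (3 * p - 1) X, (-1) := by
    refine Finset.sum_congr rfl fun A hA => ?_
    obtain ⟨h1, h2, -⟩ := (mem_ZSet ..).1 hA
    exact hmid _ h1 (by omega) (by omega)
  rw [s1, s2, sum_const, sum_const, nsmul_eq_mul, nsmul_eq_mul] at E4
  simp only [card_empty, Nat.cast_zero] at E1 E3
  have two : ((2 : ℕ) : ZMod p) = 0 := by
    push_cast at E3 ⊢
    linear_combination E3 - E1 + E2 - E4
  rw [ZMod.natCast_eq_zero_iff] at two
  have := Nat.le_of_dvd (by norm_num) two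
  omega

/-- product in the twisted monoid `ℤ ⋊ ℕ` -/
def pr (u : ℤ) : List (ℤ × ℕ) → ℤ × ℕ
  | [] => (0, 0)
  | x :: l => (x.1 + u ^ x.2 * (pr u l).1, x.2 + (pr u l).2)

theorem pr_append (u : ℤ) (l l' : List (ℤ × ℕ)) :
    pr u (l ++ l') = ((pr u l).1 + u ^ (pr u l).2 * (pr u l').1, (pr u l).2 + (pr u l').2) := by
  induction l with
  | nil => simp [pr]
  | cons x l ih =>
    simp only [List.cons_append, pr, ih, Prod.mk.injEq]
    constructor
    · rw [pow_add]; ring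
    · ring

theorem lift_le {α β : Type*} (f : α → β) (S : Multiset α) (l : List β)
    (h : (l : Multiset β) ≤ S.map f) : ∃ L : List α, (L : Multiset α) ≤ S ∧ L.map f = l := by
  classical
  induction l generalizing S with
  | nil => exact ⟨[], by simp, rfl⟩
  | cons y l ih =>
    have hy : y ∈ S.map f := Multiset.mem_of_le h (by simp)
    obtain ⟨x, hx, rfl⟩ := Multiset.mem_map.1 hy
    obtain ⟨S', rfl⟩ := Multiset.exists_cons_of_mem hx
    rw [← Multiset.cons_coe, Multiset.map_cons, Multiset.cons_le_cons_iff] at h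
    obtain ⟨L, h1, h2⟩ := ih S' h
    refine ⟨x :: L, ?_, by simp [h2]⟩
    rw [← Multiset.cons_coe, Multiset.cons_le_cons_iff]
    exact h1

theorem pr_mod (p : ℕ) (u : ℤ) (hu : (u : ZMod p) = 1) (l : List (ℤ × ℕ)) :
    ((pr u l).1 : ZMod p) = (l.map fun x => (x.1 : ZMod p)).sum ∧
    ((pr u l).2 : ZMod p) = (l.map fun x => (x.2 : ZMod p)).sum := by
  induction l with
  | nil => simp [pr]
  | cons x l ih => simp [pr, ih.1, ih.2, hu]

theorem block (p : ℕ) [hp : Fact p.Prime] (u : ℤ) (hu : (u : ZMod p) = 1)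
    (S : Multiset (ℤ × ℕ)) (hS : 4 * p - 3 ≤ Multiset.card S) :
    ∃ l : List (ℤ × ℕ), (l : Multiset (ℤ × ℕ)) ≤ S ∧ l.length = p ∧
      (p : ℤ) ∣ (pr u l).1 ∧ p ∣ (pr u l).2 := by
  classical
  induction S using Quotient.inductionOn with
  | _ L =>
  simp only [Multiset.quot_mk_to_coe, Multiset.coe_card] at hS ⊢
  obtain ⟨X, -, hX⟩ := Finset.exists_subset_card_eq (s := (univ : Finset (Fin L.length)))
    (n := 4 * p - 3) (by simpa using hS)
  obtain ⟨I, -, h2, h3, h4⟩ := reiher (p := p) (fun i : Fin L.length => ((L.get i).1 : ZMod p))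
    (fun i => ((L.get i).2 : ZMod p)) X hX
  have hL : (L : Multiset (ℤ × ℕ)) = (univ : Finset (Fin L.length)).val.map L.get := by
    conv_lhs => rw [← List.ofFn_get L]
    simp [Fin.univ_val_map]
  refine ⟨I.toList.map L.get, ?_, by simp [h2], ?_, ?_⟩
  · rw [hL, ← Multiset.map_coe, Finset.coe_toList]
    exact Multiset.map_le_map (Finset.val_le_iff.2 (Finset.subset_univ I))
  · rw [← ZMod.intCast_zmod_eq_zero_iff_dvd, (pr_mod p u hu _).1, List.map_map]
    rw [← h3]; exact Finset.sum_map_toList I _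
  · rw [← ZMod.natCast_eq_zero_iff, (pr_mod p u hu _).2, List.map_map]
    rw [← h4]; exact Finset.sum_map_toList I _

theorem blocks (p : ℕ) [hp : Fact p.Prime] (u : ℤ) (hu : (u : ZMod p) = 1) (t : ℕ) :
    ∀ (S : Multiset (ℤ × ℕ)), p * t + 3 * p - 3 ≤ Multiset.card S →
    ∃ L : List (List (ℤ × ℕ)), L.length = t ∧ (L.flatten : Multiset (ℤ × ℕ)) ≤ S ∧
      ∀ l ∈ L, l.length = p ∧ (p : ℤ) ∣ (pr u l).1 ∧ p ∣ (pr u l).2 := by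
  have h2 := hp.out.two_le
  induction t with
  | zero => intro S _; exact ⟨[], by simp⟩
  | succ t ih =>
    intro S hS
    rw [mul_add, mul_one] at hS
    obtain ⟨l, h1, h2, h3⟩ := block p u hu S (by omega)
    obtain ⟨S', rfl⟩ := Multiset.le_iff_exists_add.1 h1
    rw [Multiset.card_add, Multiset.coe_card, h2] at hS
    obtain ⟨L, g1, g2, g3⟩ := ih S' (by omega)
    refine ⟨l :: L, by simp [g1], ?_, ?_⟩
    · rw [List.flatten_cons, ← Multiset.coe_add]
      exact add_le_add le_rfl g2
    · intro l' hl'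
      rcases List.mem_cons.1 hl' with rfl | h
      · exact ⟨h2, h3⟩
      · exact g3 _ h

theorem flatten_le {α : Type*} (L L' : List (List α)) (h : (L' : Multiset (List α)) ≤ L) :
    (L'.flatten : Multiset α) ≤ L.flatten := by
  obtain ⟨l, h1, h2⟩ := Multiset.coe_le.1 h
  rw [Multiset.coe_le]
  exact ⟨l.flatten, h1.flatten, h2.flatten⟩

theorem pr_flatten (p : ℕ) (u : ℤ) (L : List (List (ℤ × ℕ)))
    (hL : ∀ l ∈ L, (p : ℤ) ∣ (pr u l).1 ∧ p ∣ (pr u l).2) :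
    pr u L.flatten = (p * (pr (u ^ p) (L.map fun l => ((pr u l).1 / p, (pr u l).2 / p))).1,
      p * (pr (u ^ p) (L.map fun l => ((pr u l).1 / p, (pr u l).2 / p))).2) := by
  induction L with
  | nil => simp [pr]
  | cons l L ih =>
    obtain ⟨h1, h2⟩ := hL l (by simp)
    rw [List.flatten_cons, pr_append, ih (fun l' h => hL l' (by simp [h]))]
    simp only [List.map_cons, pr, Prod.mk.injEq, mul_add]
    rw [← pow_mul, Int.mul_ediv_cancel' h1, Nat.mul_div_cancel' h2]
    exact ⟨by ring, rfl⟩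

theorem main_pr (m : ℕ) : 0 < m → ∀ u : ℤ, (m : ℤ) ∣ u ^ m - 1 → ∀ S : Multiset (ℤ × ℕ),
    4 * m - 3 ≤ Multiset.card S → ∃ l : List (ℤ × ℕ), (l : Multiset (ℤ × ℕ)) ≤ S ∧
      l.length = m ∧ (m : ℤ) ∣ (pr u l).1 ∧ m ∣ (pr u l).2 := by
  induction m using Nat.strong_induction_on with
  | _ m ih =>
  intro hm u hu S hS
  by_cases h1 : m = 1
  · subst h1
    obtain ⟨x, hx⟩ := Multiset.card_pos_iff_exists_mem.1 (by omega : 0 < Multiset.card S)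
    exact ⟨[x], by simpa using hx, by simp, by simp, by simp⟩
  have hpp := Nat.minFac_prime h1
  obtain ⟨k, hk⟩ := Nat.minFac_dvd m
  have hcop : Nat.Coprime m (m.minFac - 1) := by
    rw [Nat.coprime_iff_gcd_eq_one]
    by_contra hne
    have hq := Nat.minFac_prime hne
    have d1 : (m.gcd (m.minFac - 1)).minFac ∣ m := (Nat.minFac_dvd _).trans (Nat.gcd_dvd_left _ _)
    have d2 : (m.gcd (m.minFac - 1)).minFac ∣ m.minFac - 1 :=
      (Nat.minFac_dvd _).trans (Nat.gcd_dvd_right _ _)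
    have l1 := Nat.minFac_le_of_dvd hq.two_le d1
    have := hpp.two_le
    have l2 := Nat.le_of_dvd (by omega) d2
    omega
  generalize m.minFac = p at *
  have : Fact p.Prime := ⟨hpp⟩
  have hp2 := hpp.two_le
  have hk0 : 0 < k := Nat.pos_of_ne_zero (by rintro rfl; simp at hk; omega)
  have hup : (u : ZMod p) = 1 := by
    have e1 : (u : ZMod p) ^ m = 1 := by
      have : (p : ℤ) ∣ u ^ m - 1 := dvd_trans (by rw [hk]; push_cast; exact dvd_mul_right _ _) hu
      rw [← ZMod.intCast_zmod_eq_zero_iff_dvd] at this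
      push_cast at this
      exact sub_eq_zero.1 this
    have hne : (u : ZMod p) ≠ 0 := by
      intro h0; rw [h0, zero_pow (by omega)] at e1; exact zero_ne_one e1
    have e2 := ZMod.pow_card_sub_one_eq_one hne
    have := Nat.dvd_gcd (orderOf_dvd_of_pow_eq_one e1) (orderOf_dvd_of_pow_eq_one e2)
    rw [hcop] at this
    exact orderOf_eq_one_iff.1 (Nat.dvd_one.1 this)
  obtain ⟨L, g1, g2, g3⟩ := blocks p u hup (4 * k - 3) S (by
    have : p * (4 * k - 3) = 4 * m - 3 * p := by rw [Nat.mul_sub, hk]; congr 1 <;> ring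
    have : p ≤ m := by rw [hk]; exact Nat.le_mul_of_pos_right _ hk0
    omega)
  obtain ⟨l, f1, f2, f3, f4⟩ := ih k (by rw [hk]; nlinarith) hk0 (u ^ p) (by
    rw [← pow_mul, ← hk]
    exact dvd_trans (by rw [hk]; push_cast; exact dvd_mul_left _ _) hu)
    ((L : Multiset _).map fun l => ((pr u l).1 / p, (pr u l).2 / p)) (by simp [g1])
  obtain ⟨L', q1, q2⟩ := lift_le _ _ _ f1
  have hmem : ∀ l ∈ L', l ∈ L := fun l hl => by
    simpa using Multiset.mem_of_le q1 (by simpa using hl : l ∈ (L' : Multiset _))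
  refine ⟨L'.flatten, (flatten_le _ _ q1).trans g2, ?_, ?_⟩
  · have hc : L'.map List.length = List.replicate k p := by
      rw [List.eq_replicate_iff]
      refine ⟨by rw [List.length_map, ← f2, ← q2, List.length_map], ?_⟩
      intro b hb
      obtain ⟨l, hl, rfl⟩ := List.mem_map.1 hb
      exact (g3 l (hmem l hl)).1
    rw [List.length_flatten, hc, List.sum_replicate, smul_eq_mul, hk, mul_comm]
  · rw [pr_flatten p u L' (fun l hl => (g3 l (hmem l hl)).2), q2, hk]
    push_cast
    exact ⟨mul_dvd_mul_left _ f3, mul_dvd_mul_left _ f4⟩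

theorem phi_apply (m : ℕ) [NeZero m]
    (φ : Multiplicative (ZMod m) →* MulAut (Multiplicative (ZMod m))) :
    ∃ u : ℤ, ∀ (n : ℕ) (x : ZMod m),
      φ (Multiplicative.ofAdd (n : ZMod m)) (Multiplicative.ofAdd x) =
        Multiplicative.ofAdd ((u : ZMod m) ^ n * x) := by
  obtain ⟨u, hu⟩ := ZMod.intCast_surjective
    (Multiplicative.toAdd (φ (Multiplicative.ofAdd 1) (Multiplicative.ofAdd 1)))
  have h1 : ∀ x : ZMod m, φ (Multiplicative.ofAdd 1) (Multiplicative.ofAdd x) =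
      Multiplicative.ofAdd ((u : ZMod m) * x) := by
    intro x
    obtain ⟨k, rfl⟩ := ZMod.natCast_zmod_surjective x
    have : (Multiplicative.ofAdd (k : ZMod m)) = (Multiplicative.ofAdd (1 : ZMod m)) ^ k := by
      rw [← ofAdd_nsmul, nsmul_eq_mul, mul_one]
    rw [this, map_pow, hu, mul_comm, ← nsmul_eq_mul, ofAdd_nsmul, ofAdd_toAdd]
  refine ⟨u, fun n => ?_⟩
  induction n with
  | zero => intro x; simp
  | succ n ih =>
    intro x
    rw [Nat.cast_succ, ofAdd_add, map_mul, MulAut.mul_apply, h1, ih, pow_succ, mul_assoc]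

/-- Every sequence of length `4m − 3` over `C_m ⋉_φ C_m` contains a product-one
subsequence of length exactly `m`. -/
theorem product_one_subseq_eq_m (m : ℕ) (hm : 0 < m)
    (φ : Multiplicative (ZMod m) →* MulAut (Multiplicative (ZMod m)))
    (S : Multiset (Multiplicative (ZMod m) ⋊[φ] Multiplicative (ZMod m)))
    (hS : Multiset.card S = 4 * m - 3) :
    ∃ T ≤ S, Multiset.card T = m ∧ IsProductOne T := by
  have : NeZero m := ⟨hm.ne'⟩
  obtain ⟨u, hu⟩ := phi_apply m φ
  have hum : (m : ℤ) ∣ u ^ m - 1 := by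
    have := hu m 1
    rw [ZMod.natCast_self, ofAdd_zero, map_one, mul_one] at this
    rw [← ZMod.intCast_zmod_eq_zero_iff_dvd]
    push_cast
    exact sub_eq_zero.2 (Multiplicative.ofAdd.injective this.symm)
  obtain ⟨l, h1, h2, h3, h4⟩ := main_pr m hm u hum
    (S.map fun g => (((Multiplicative.toAdd g.left).val : ℤ), (Multiplicative.toAdd g.right).val))
    (by simp [hS])
  obtain ⟨L, q1, q2⟩ := lift_le _ _ _ h1
  refine ⟨L, q1, by
    have := congrArg List.length q2
    rw [List.length_map, h2] at this
    rw [Multiset.coe_card, this], L, rfl, ?_⟩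
  have key : ∀ L : List (Multiplicative (ZMod m) ⋊[φ] Multiplicative (ZMod m)),
      L.prod.left = Multiplicative.ofAdd ((pr u (L.map fun g =>
        (((Multiplicative.toAdd g.left).val : ℤ), (Multiplicative.toAdd g.right).val))).1 : ZMod m) ∧
      L.prod.right = Multiplicative.ofAdd ((pr u (L.map fun g =>
        (((Multiplicative.toAdd g.left).val : ℤ), (Multiplicative.toAdd g.right).val))).2 : ZMod m) := by
    intro L
    induction L with
    | nil => simp [pr]
    | cons g L ih =>
      rw [List.prod_cons, SemidirectProduct.mul_left, SemidirectProduct.mul_right, ih.1, ih.2]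
      simp only [List.map_cons, pr]
      have hr : g.right = Multiplicative.ofAdd (((Multiplicative.toAdd g.right).val : ℕ) : ZMod m) := by
        rw [ZMod.natCast_zmod_val, ofAdd_toAdd]
      constructor
      · conv_lhs => rw [hr]
        rw [hu]
        push_cast
        rw [ZMod.natCast_zmod_val, ofAdd_add, ofAdd_toAdd]
      · push_cast
        rw [ZMod.natCast_zmod_val, ofAdd_add, ofAdd_toAdd]
  obtain ⟨k1, k2⟩ := key L
  rw [q2, (ZMod.intCast_zmod_eq_zero_iff_dvd _ _).2 h3] at k1
  rw [q2, (ZMod.natCast_eq_zero_iff _ _).2 h4] at k2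
  exact SemidirectProduct.ext k1 k2
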